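/- arXiv:1910.12341 — 2 statements merged into one kernel-verified Lean document; each statement's English description precedes it below -/
import Mathlib

section
/- Let $X$ be a standard Borel space with a Borel probability measure $\mu$, let $Y$ be a Polish space, and let $p: Y \to X$ be a Borel map with $\mu(p(Y)) = 1$ such that $p^{-1}(x)$ is compact for $\mu$-almost all $x \in X$. Let $\Gamma$ be a commutative monoid acting on $Y$ by continuous maps $S_\gamma: Y \to Y$ and acting on $X$ by $\mu$-preserving measurable maps $T_\gamma: X \to X$, such that $p \circ S_\gamma = T_\gamma \circ p$ for all $\gamma \in \Gamma$. Then there exists a Borel probability measure $\nu$ on $Y$ with $(S_\gamma)_*\nu = \nu$ for all $\gamma \in \Gamma$ and $p_*\nu = \mu$. -/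
open MeasureTheory

open Set Filter Topology
open scoped ENNReal BoundedContinuousFunction CompactlySupported

/-!
Let `q f` be the upper integral of a bounded continuous function `f` on `Y`, the infimum of `∫ g ∂μ`
over the integrable `g` with `f ≤ g ∘ p`. It is sublinear and does not increase under the maps
`S i`. Minimising `q` over the polynomials in the commuting operators `f ↦ f ∘ S i` that do not
increase `q` keeps it sublinear, and averages of powers show that linear functionals below the
minimum are invariant; so Hahn–Banach gives an invariant linear `Λ ≤ q`.

Compactness of the fibers makes `F ↦ μ (p '' F)` continuous along decreasing sequences of closed
sets. Hence most fibers lie in a common compact set, so `Λ` is tight: its representing measure on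
the Stone–Čech compactification is carried by `Y` and `Λ` is integration against a measure `ν` on
`Y`. From `Λ ≤ q` and the same continuity, `ν F ≤ μ (p '' F)` for closed `F`, whence `ν.map p ≤ μ`,
and both are probability measures.
-/

section UniversalMeasurability

lemma isCompact_iInter_setOf_le (k : ℕ → ℕ) : IsCompact (⋂ i, {x : ℕ → ℕ | x i ≤ k i}) := by
  simpa only [univ_pi_eq_iInter] using! isCompact_univ_pi fun i ↦ (finite_Iic (k i)).isCompact

lemma exists_biInter_setOf_le_subset_of_isOpen (k : ℕ → ℕ) {V : Set (ℕ → ℕ)} (hV : IsOpen V)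
    (hkV : ⋂ i, {x | x i ≤ k i} ⊆ V) : ∃ n, ⋂ i < n, {x : ℕ → ℕ | x i ≤ k i} ⊆ V := by
  let := PiNat.metricSpaceNatNat
  obtain ⟨δ, hδ, hδV⟩ := (isCompact_iInter_setOf_le k).exists_thickening_subset_open hV hkV
  obtain ⟨n, hn⟩ := exists_pow_lt_of_lt_one hδ (one_half_lt_one (α := ℝ))
  refine ⟨n, fun x hx ↦ hδV (Metric.mem_thickening_iff.2 ⟨fun i ↦ min (x i) (k i), ?_, ?_⟩)⟩
  · exact mem_iInter.2 fun i ↦ min_le_right (x i) (k i)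
  · refine lt_of_le_of_lt (PiNat.mem_cylinder_iff_dist_le.1 fun i hi ↦ ?_) hn
    exact (min_eq_left (mem_iInter₂.1 hx i hi)).symm

lemma exists_forall_lt_measure_image_biInter {α β : Type*} [MeasurableSpace α] {μ : Measure α}
    {f : β → α} {A : ℕ → ℕ → Set β} (hA : ∀ i, Monotone (A i)) (hA_univ : ∀ i, ⋃ j, A i j = univ)
    {c : ℝ≥0∞} (hc : c < μ (range f)) :
    ∃ k : ℕ → ℕ, ∀ n, c < μ (f '' ⋂ i < n, A i (k i)) := by
  have hexists_index (n : ℕ) (s : {s // c < μ (f '' s)}) : ∃ j, c < μ (f '' (s ∩ A n j)) := by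
    have hs : f '' s = ⋃ j, f '' (s ∩ A n j) := by
      rw [← image_iUnion, ← inter_iUnion, hA_univ, inter_univ]
    have hmono : Monotone fun j ↦ f '' (s ∩ A n j) :=
      fun i j hij ↦ image_mono (inter_subset_inter_right _ (hA n hij))
    exact lt_iSup_iff.1 (hmono.measure_iUnion ▸ hs ▸ s.2)
  choose j hj using hexists_index
  let s : ℕ → {s // c < μ (f '' s)} :=
    Nat.rec ⟨univ, by rwa [image_univ]⟩ fun n s ↦ ⟨s ∩ A n (j n s), hj n s⟩
  have hs (n : ℕ) : (s n).1 = ⋂ i < n, A i (j i (s i)) := by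
    induction n with
    | zero => simp [s]
    | succ n ih => rw [biInter_lt_succ, ← ih]
  exact ⟨fun n ↦ j n (s n), fun n ↦ hs n ▸ (s n).2⟩

lemma exists_isCompact_subset_le_measure_of_analyticSet {α : Type*} [TopologicalSpace α]
    [MeasurableSpace α] {μ : Measure α} [μ.OuterRegular] {s : Set α} (hs : AnalyticSet s)
    {c : ℝ≥0∞} (hc : c < μ s) : ∃ K ⊆ s, IsCompact K ∧ c ≤ μ K := by
  rw [AnalyticSet] at hs
  obtain rfl | ⟨f, hf, rfl⟩ := hs
  · simp at hc
  obtain ⟨k, hk⟩ := exists_forall_lt_measure_image_biInter (A := fun i j ↦ {x | x i ≤ j})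
    (fun i a b hab x hx ↦ le_trans hx hab)
    (fun i ↦ eq_univ_of_forall fun x ↦ mem_iUnion.2 ⟨x i, le_refl (x i)⟩) hc
  refine ⟨f '' ⋂ i, {x | x i ≤ k i}, image_subset_range _ _,
    (isCompact_iInter_setOf_le k).image hf, ?_⟩
  by_contra! hlt
  obtain ⟨U, hKU, hU, hUc⟩ := exists_isOpen_lt_of_lt _ _ hlt
  obtain ⟨n, hn⟩ := exists_biInter_setOf_le_subset_of_isOpen k (hU.preimage hf)
    (image_subset_iff.1 hKU)
  exact (hk n).not_ge ((measure_mono (image_subset_iff.2 hn)).trans hUc.le)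

lemma nullMeasurableSet_of_analyticSet {α : Type*} [TopologicalSpace α] [T2Space α]
    [MeasurableSpace α] [OpensMeasurableSpace α] {μ : Measure α} [IsFiniteMeasure μ]
    [μ.OuterRegular] {s : Set α} (hs : AnalyticSet s) : NullMeasurableSet s μ := by
  obtain h0 | h0 := eq_zero_or_pos (μ s)
  · exact .of_null h0
  obtain ⟨u, -, hu, hu_lim⟩ := exists_seq_strictMono_tendsto' h0
  choose K hKs hK huK using fun n ↦ exists_isCompact_subset_le_measure_of_analyticSet hs (hu n).2
  have hK_meas : MeasurableSet (⋃ n, K n) := .iUnion fun n ↦ (hK n).measurableSet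
  have hle : μ s ≤ μ (⋃ n, K n) := le_of_tendsto' hu_lim fun n ↦
    (huK n).trans (measure_mono (subset_iUnion _ n))
  exact hK_meas.nullMeasurableSet.congr (ae_eq_of_subset_of_measure_ge (iUnion_subset hKs) hle
    hK_meas.nullMeasurableSet (measure_ne_top _ _))

variable {X Y : Type*} [MeasurableSpace X] [MeasurableSpace.CountablySeparated X] {μ : Measure X}
  [IsFiniteMeasure μ] [MeasurableSpace Y] [StandardBorelSpace Y] {p : Y → X}

lemma nullMeasurableSet_image (hp : Measurable p) {s : Set Y} (hs : MeasurableSet s) :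
    NullMeasurableSet (p '' s) μ := by
  obtain ⟨e, he, he_inj⟩ := MeasurableSpace.measurable_injection_nat_bool_of_countablySeparated X
  have hanalytic : AnalyticSet (e '' (p '' s)) :=
    image_image e p s ▸ hs.analyticSet_image (he.comp hp)
  have hnull := nullMeasurableSet_of_analyticSet (μ := μ.map e) hanalytic
  exact preimage_image_eq (p '' s) he_inj ▸
    hnull.preimage (he.measurePreserving μ).quasiMeasurePreserving

end UniversalMeasurability

section CompactFibers

variable {X Y : Type*} [MeasurableSpace X] [MeasurableSpace.CountablySeparated X] {μ : Measure X}
  [IsFiniteMeasure μ] [TopologicalSpace Y] [PolishSpace Y] [MeasurableSpace Y] [BorelSpace Y]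
  {p : Y → X}

lemma tendsto_measure_image_iInter (hp : Measurable p)
    (hfib : ∀ᵐ x ∂μ, IsCompact (p ⁻¹' {x})) {F : ℕ → Set Y} (hF : Antitone F)
    (hF_closed : ∀ n, IsClosed (F n)) :
    Tendsto (fun n ↦ μ (p '' F n)) atTop (𝓝 (μ (p '' ⋂ n, F n))) := by
  have himage : (⋂ n, p '' F n : Set X) ≤ᵐ[μ] p '' ⋂ n, F n := by
    filter_upwards [hfib] with x hx hxF
    have hnonempty (n : ℕ) : (p ⁻¹' {x} ∩ F n).Nonempty :=
      let ⟨y, hy, hyx⟩ := mem_iInter.1 hxF n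
      ⟨y, hyx, hy⟩
    obtain ⟨y, hy⟩ := IsCompact.nonempty_iInter_of_sequence_nonempty_isCompact_isClosed
      (fun n ↦ p ⁻¹' {x} ∩ F n) (fun n ↦ inter_subset_inter_right _ (hF n.le_succ)) hnonempty
      (hx.inter_right (hF_closed 0)) (fun n ↦ hx.isClosed.inter (hF_closed n))
    rw [← inter_iInter] at hy
    exact ⟨y, hy.2, hy.1⟩
  rw [measure_congr ((image_iInter_subset F p).eventuallyLE.antisymm himage)]
  exact tendsto_measure_iInter_atTop
    (fun n ↦ nullMeasurableSet_image hp (hF_closed n).measurableSet)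
    (fun _ _ hmn ↦ image_mono (hF hmn)) ⟨0, measure_ne_top _ _⟩

lemma exists_measure_image_compl_accumulate_lt (hp : Measurable p)
    (hfib : ∀ᵐ x ∂μ, IsCompact (p ⁻¹' {x})) {V : ℕ → Set Y} (hV : ∀ i, IsOpen (V i))
    (hV_univ : ⋃ i, V i = univ) {ε : ℝ≥0∞} (hε : 0 < ε) :
    ∃ n, μ (p '' (accumulate V n)ᶜ) < ε := by
  have hlim := tendsto_measure_image_iInter hp hfib
    (fun _ _ hmn ↦ compl_subset_compl.2 (monotone_accumulate (s := V) hmn))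
    (fun _ ↦ (isOpen_biUnion fun i _ ↦ hV i).isClosed_compl)
  rw [← compl_iUnion, iUnion_accumulate, hV_univ, compl_univ, image_empty, measure_empty] at hlim
  exact (hlim.eventually_lt_const hε).exists

lemma exists_isCompact_measure_image_compl_le (hp : Measurable p)
    (hfib : ∀ᵐ x ∂μ, IsCompact (p ⁻¹' {x})) {ε : ℝ≥0∞} (hε : ε ≠ 0) :
    ∃ K : Set Y, IsCompact K ∧ μ (p '' Kᶜ) ≤ ε := by
  cases isEmpty_or_nonempty Y
  · exact ⟨∅, isCompact_empty, by simp [eq_empty_of_isEmpty]⟩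
  let := TopologicalSpace.upgradeIsCompletelyMetrizable Y
  let y := TopologicalSpace.denseSeq Y
  have hy_cover {r : ℝ} (hr : 0 < r) : ⋃ i, Metric.ball (y i) r = univ :=
    eq_univ_of_forall fun x ↦
      mem_iUnion.2 (Metric.denseRange_iff.1 (TopologicalSpace.denseRange_denseSeq Y) x r hr)
  obtain ⟨r, -, hr_pos, hr_lim⟩ := exists_seq_strictAnti_tendsto (0 : ℝ)
  obtain ⟨δ, hδ, hδε⟩ := ENNReal.exists_pos_sum_of_countable' hε ℕ
  choose m hm using fun n ↦ exists_measure_image_compl_accumulate_lt hp hfib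
    (V := fun i ↦ Metric.ball (y i) (r n)) (fun _ ↦ Metric.isOpen_ball)
    (hy_cover (hr_pos n)) (hδ n)
  refine ⟨⋂ n, ⋃ i ≤ m n, Metric.closedBall (y i) (r n), ?_, ?_⟩
  · refine TotallyBounded.isCompact_of_isClosed (Metric.totallyBounded_iff.2 fun η hη ↦ ?_)
      (isClosed_iInter fun n ↦ (finite_Iic (m n)).isClosed_biUnion fun _ _ ↦
        Metric.isClosed_closedBall)
    obtain ⟨n, hn⟩ := (hr_lim.eventually_lt_const hη).exists
    refine ⟨y '' Iic (m n), (finite_Iic (m n)).image y, ?_⟩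
    rw [biUnion_image]
    exact (iInter_subset _ n).trans (iUnion₂_mono fun _ _ ↦ Metric.closedBall_subset_ball hn)
  · rw [compl_iInter, image_iUnion]
    refine (measure_iUnion_le _).trans ((ENNReal.tsum_le_tsum fun n ↦ ?_).trans hδε.le)
    refine (measure_mono (image_mono (compl_subset_compl.2 ?_))).trans (hm n).le
    exact iUnion₂_mono fun _ _ ↦ Metric.ball_subset_closedBall

lemma measure_le_measure_image_of_isClosed (hp : Measurable p)
    (hfib : ∀ᵐ x ∂μ, IsCompact (p ⁻¹' {x})) {ν : Measure Y}
    (hν : ∀ V, IsOpen V → ν V ≤ μ (p '' V)) {F : Set Y} (hF : IsClosed F) : ν F ≤ μ (p '' F) := by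
  let := TopologicalSpace.upgradeIsCompletelyMetrizable Y
  obtain ⟨δ, hδ_anti, hδ_pos, hδ_lim⟩ := exists_seq_strictAnti_tendsto (0 : ℝ)
  have hF_iInter : ⋂ n, Metric.cthickening (δ n) F = F := by
    have h := Metric.closure_eq_iInter_cthickening' F (range δ) fun η hη ↦
      let ⟨n, hn⟩ := (hδ_lim.eventually_lt_const hη).exists
      ⟨δ n, mem_range_self n, hδ_pos n, hn.le⟩
    rw [hF.closure_eq, biInter_range] at h
    exact h.symm
  have hlim := tendsto_measure_image_iInter hp hfib (F := fun n ↦ Metric.cthickening (δ n) F)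
    (fun _ _ hmn ↦ Metric.cthickening_mono (hδ_anti.antitone hmn) F)
    (fun _ ↦ Metric.isClosed_cthickening)
  rw [hF_iInter] at hlim
  refine ge_of_tendsto' hlim fun n ↦ ?_
  calc ν F ≤ ν (Metric.thickening (δ n) F) :=
        measure_mono (Metric.self_subset_thickening (hδ_pos n) F)
    _ ≤ μ (p '' Metric.thickening (δ n) F) := hν _ Metric.isOpen_thickening
    _ ≤ μ (p '' Metric.cthickening (δ n) F) :=
        measure_mono (image_mono (Metric.thickening_subset_cthickening _ _))

end CompactFibers

/-- Real-valued sublinear functionals, the majorants of the Hahn–Banach theorem. -/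
structure IsSublinear {E : Type*} [AddCommGroup E] [Module ℝ E] (q : E → ℝ) : Prop where
  map_add_le : ∀ v w, q (v + w) ≤ q v + q w
  map_smul_of_pos : ∀ c : ℝ, 0 < c → ∀ v, q (c • v) = c * q v

namespace IsSublinear

variable {ι E : Type*} [AddCommGroup E] [Module ℝ E] {q : E → ℝ}

lemma of_map_smul_le (hq_add : ∀ v w, q (v + w) ≤ q v + q w)
    (hq_smul : ∀ c : ℝ, 0 < c → ∀ v, q (c • v) ≤ c * q v) : IsSublinear q where
  map_add_le := hq_add
  map_smul_of_pos c hc v := (hq_smul c hc v).antisymm <| by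
    have h := hq_smul c⁻¹ (inv_pos.2 hc) (c • v)
    rwa [inv_smul_smul₀ hc.ne', le_inv_mul_iff₀ hc] at h

lemma map_zero (hq : IsSublinear q) : q 0 = 0 := by
  have h := hq.map_smul_of_pos 2 two_pos 0
  rw [smul_zero] at h
  linarith

lemma neg_map_neg_le (hq : IsSublinear q) (v : E) : -q (-v) ≤ q v := by
  have h := hq.map_add_le v (-v)
  rw [add_neg_cancel, hq.map_zero] at h
  linarith

lemma map_sum_le (hq : IsSublinear q) (s : Finset ι) (v : ι → E) :
    q (∑ i ∈ s, v i) ≤ ∑ i ∈ s, q (v i) :=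
  Finset.le_sum_of_subadditive q hq.map_zero.le hq.map_add_le s v

lemma exists_linearMap_le (hq : IsSublinear q) : ∃ Λ : E →ₗ[ℝ] ℝ, ∀ v, Λ v ≤ q v := by
  obtain ⟨Λ, -, hΛ⟩ := exists_extension_of_le_sublinear ⊥ q hq.map_smul_of_pos hq.map_add_le
    (by rintro ⟨v, rfl : v = 0⟩; exact hq.map_zero.ge)
  exact ⟨Λ, hΛ⟩

end IsSublinear

section InvariantHahnBanach

variable {ι E : Type*} [AddCommGroup E] [Module ℝ E] {q : E → ℝ} {U : ι → Module.End ℝ E}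

/-- The polynomials in the operators `U i` that do not increase `q`. They supply the averages of
the powers of the `U i` used to make `q` invariant. -/
def nonincreasingAdjoin (q : E → ℝ) (U : ι → Module.End ℝ E) : Submonoid (Module.End ℝ E) where
  carrier := {A | A ∈ Algebra.adjoin ℝ (range U) ∧ ∀ v, q (A v) ≤ q v}
  one_mem' := ⟨one_mem _, fun _ ↦ le_rfl⟩
  mul_mem' hA hB := ⟨mul_mem hA.1 hB.1, fun v ↦ (hA.2 _).trans (hB.2 v)⟩

lemma mem_nonincreasingAdjoin {i : ι} (hqU : ∀ v, q (U i v) ≤ q v) :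
    U i ∈ nonincreasingAdjoin q U :=
  ⟨Algebra.subset_adjoin ⟨i, rfl⟩, hqU⟩

lemma commute_of_mem_nonincreasingAdjoin (hUU : ∀ i j, Commute (U i) (U j))
    {A B : Module.End ℝ E} (hA : A ∈ nonincreasingAdjoin q U) (hB : B ∈ nonincreasingAdjoin q U) :
    Commute A B := by
  refine Algebra.commute_of_mem_adjoin_of_forall_mem_commute hB.1 ?_
  rintro _ ⟨j, rfl⟩
  refine (Algebra.commute_of_mem_adjoin_of_forall_mem_commute hA.1 ?_).symm
  rintro _ ⟨i, rfl⟩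
  exact hUU j i

lemma smul_sum_pow_mem_nonincreasingAdjoin (hq : IsSublinear q) {i : ι}
    (hqU : ∀ v, q (U i v) ≤ q v) {n : ℕ} (hn : n ≠ 0) :
    (n : ℝ)⁻¹ • ∑ k ∈ Finset.range n, U i ^ k ∈ nonincreasingAdjoin q U := by
  have hUi := mem_nonincreasingAdjoin hqU
  refine ⟨Subalgebra.smul_mem _ (sum_mem fun k _ ↦ (pow_mem hUi k).1) _, fun v ↦ ?_⟩
  have hn' : (0 : ℝ) < n := by positivity
  rw [LinearMap.smul_apply, LinearMap.sum_apply, hq.map_smul_of_pos _ (inv_pos.2 hn'),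
    inv_mul_le_iff₀ hn']
  calc q (∑ k ∈ Finset.range n, (U i ^ k) v)
      ≤ ∑ k ∈ Finset.range n, q ((U i ^ k) v) := hq.map_sum_le _ _
    _ ≤ ∑ _k ∈ Finset.range n, q v := Finset.sum_le_sum fun k _ ↦ (pow_mem hUi k).2 v
    _ = n * q v := by rw [Finset.sum_const, Finset.card_range, nsmul_eq_mul]

/-- The infimum of `q` over the orbit of a vector under `nonincreasingAdjoin q U`. If `q` is
sublinear and the `U i` commute and do not increase `q`, then it is a sublinear functional below `q`
all of whose linear minorants are `U`-invariant. -/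
noncomputable def orbitInf (q : E → ℝ) (U : ι → Module.End ℝ E) (v : E) : ℝ :=
  ⨅ A : nonincreasingAdjoin q U, q (A.1 v)

lemma bddBelow_range_orbit (hq : IsSublinear q) (v : E) :
    BddBelow (range fun A : nonincreasingAdjoin q U ↦ q (A.1 v)) := by
  refine ⟨-q (-v), ?_⟩
  rintro _ ⟨A, rfl⟩
  have h := A.2.2 (-v)
  rw [map_neg] at h
  exact (neg_le_neg h).trans (hq.neg_map_neg_le _)

lemma orbitInf_le (hq : IsSublinear q) {A : Module.End ℝ E} (hA : A ∈ nonincreasingAdjoin q U)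
    (v : E) : orbitInf q U v ≤ q (A v) :=
  ciInf_le (bddBelow_range_orbit hq v) ⟨A, hA⟩

lemma isSublinear_orbitInf (hq : IsSublinear q) (hUU : ∀ i j, Commute (U i) (U j)) :
    IsSublinear (orbitInf q U) where
  map_add_le v w := le_ciInf_add_ciInf fun A B ↦
    calc orbitInf q U (v + w)
        ≤ q ((A.1 * B.1) (v + w)) := orbitInf_le hq (mul_mem A.2 B.2) _
      _ ≤ q ((A.1 * B.1) v) + q ((A.1 * B.1) w) := map_add (A.1 * B.1) v w ▸ hq.map_add_le _ _
      _ = q ((B.1 * A.1) v) + q ((A.1 * B.1) w) := by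
        rw [(commute_of_mem_nonincreasingAdjoin hUU A.2 B.2).eq]
      _ ≤ q (A.1 v) + q (B.1 w) := add_le_add (B.2.2 _) (A.2.2 _)
  map_smul_of_pos c hc v := by
    simp only [orbitInf, map_smul, hq.map_smul_of_pos c hc, Real.mul_iInf_of_nonneg hc.le]

lemma orbitInf_sub_apply_nonpos (hq : IsSublinear q) {i : ι} (hqU : ∀ v, q (U i v) ≤ q v) (v : E) :
    orbitInf q U (v - U i v) ≤ 0 := by
  have hbound (n : ℕ) (hn : n ≠ 0) : orbitInf q U (v - U i v) ≤ (q v + q (-v)) / n := by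
    have htelescope : (∑ k ∈ Finset.range n, U i ^ k) (v - U i v) = v + (U i ^ n) (-v) := by
      simpa [sub_eq_add_neg] using congrArg (· v) (geom_sum_mul_neg (U i) n)
    calc orbitInf q U (v - U i v)
        ≤ q (((n : ℝ)⁻¹ • ∑ k ∈ Finset.range n, U i ^ k) (v - U i v)) :=
          orbitInf_le hq (smul_sum_pow_mem_nonincreasingAdjoin hq hqU hn) _
      _ = q (v + (U i ^ n) (-v)) / n := by
        rw [LinearMap.smul_apply, htelescope, hq.map_smul_of_pos _ (by positivity), inv_mul_eq_div]
      _ ≤ (q v + q (-v)) / n := by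
        gcongr
        exact (hq.map_add_le _ _).trans <|
          add_le_add_right ((pow_mem (mem_nonincreasingAdjoin hqU) n).2 _) _
  refine ge_of_tendsto (tendsto_const_div_atTop_nhds_zero_nat (q v + q (-v))) ?_
  filter_upwards [eventually_ne_atTop 0] with n hn using hbound n hn

theorem exists_invariant_linearMap_le (hq : IsSublinear q) (hUU : ∀ i j, Commute (U i) (U j))
    (hqU : ∀ i v, q (U i v) ≤ q v) :
    ∃ Λ : E →ₗ[ℝ] ℝ, (∀ i v, Λ (U i v) = Λ v) ∧ ∀ v, Λ v ≤ q v := by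
  obtain ⟨Λ, hΛ⟩ := (isSublinear_orbitInf hq hUU).exists_linearMap_le
  have hle (i : ι) (v : E) : Λ v ≤ Λ (U i v) :=
    sub_nonpos.1 (map_sub Λ v _ ▸ (hΛ _).trans (orbitInf_sub_apply_nonpos hq (hqU i) v))
  refine ⟨Λ, fun i v ↦ (hle i v).antisymm' ?_, fun v ↦ (hΛ v).trans (orbitInf_le hq (one_mem _) v)⟩
  have h := hle i (-v)
  rwa [map_neg, map_neg, map_neg, neg_le_neg_iff] at h

end InvariantHahnBanach

section TightFunctionals

lemma exists_isProbabilityMeasure_integral_eq_of_compactSpace {Z : Type*} [TopologicalSpace Z]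
    [CompactSpace Z] [T2Space Z] [MeasurableSpace Z] [BorelSpace Z] (Λ : (Z →ᵇ ℝ) →ₗ[ℝ] ℝ)
    (hΛ_nonneg : ∀ f, 0 ≤ f → 0 ≤ Λ f) (hΛ_one : Λ 1 = 1) :
    ∃ m : Measure Z, m.Regular ∧ IsProbabilityMeasure m ∧ ∀ f : Z →ᵇ ℝ, ∫ z, f z ∂m = Λ f := by
  let Φ : C_c(Z, ℝ) →ₚ[ℝ] ℝ := PositiveLinearMap.mk₀
    { toFun := fun g ↦ Λ (BoundedContinuousFunction.mkOfCompact g.toContinuousMap)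
      map_add' := fun g g' ↦ by rw [← map_add]; rfl
      map_smul' := fun c g ↦ by rw [RingHom.id_apply, ← map_smul]; rfl }
    (fun g hg ↦ hΛ_nonneg _ hg)
  have hintegral (f : Z →ᵇ ℝ) : ∫ z, f z ∂(RealRMK.rieszMeasure Φ) = Λ f :=
    RealRMK.integral_rieszMeasure Φ
      { toFun := f, hasCompactSupport' := HasCompactSupport.of_compactSpace _ }
  have := CompactSpace.isFiniteMeasure (μ := RealRMK.rieszMeasure Φ)
  refine ⟨RealRMK.rieszMeasure Φ, inferInstance, isProbabilityMeasure_iff_real.2 ?_, hintegral⟩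
  simpa using (hintegral 1).trans hΛ_one

lemma exists_boundedContinuousFunction_stoneCech {Y : Type*} [TopologicalSpace Y]
    (f : Y →ᵇ ℝ) :
    ∃ g : StoneCech Y →ᵇ ℝ, ∀ y, g (stoneCechUnit y) = f y := by
  have hf (y : Y) : f y ∈ Icc (-‖f‖) ‖f‖ := abs_le.1 (f.norm_coe_le_norm y)
  have hf' : Continuous fun y ↦ (⟨f y, hf y⟩ : Icc (-‖f‖) ‖f‖) := f.continuous.subtype_mk hf
  refine ⟨.mkOfCompact ⟨_, continuous_subtype_val.comp (continuous_stoneCechExtend hf')⟩,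
    fun y ↦ congrArg Subtype.val (stoneCechExtend_stoneCechUnit hf' y)⟩

variable {Y Z : Type*} [TopologicalSpace Y] [MeasurableSpace Y] [BorelSpace Y]
  [TopologicalSpace Z] [T2Space Z] [MeasurableSpace Z] [BorelSpace Z] {e : Y → Z}

lemma measurableSet_image_inter_of_isCompact (he : Continuous e) (he_inj : Function.Injective e)
    {K : Set Y} (hK : IsCompact K) {s : Set Y} (hs : MeasurableSet s) :
    MeasurableSet (e '' (s ∩ K)) := by
  have := isCompact_iff_compactSpace.1 hK
  have hembedding : MeasurableEmbedding (e ∘ ((↑) : K → Y)) :=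
    ((he.comp continuous_subtype_val).isClosedEmbedding
      (he_inj.comp Subtype.val_injective)).measurableEmbedding
  rw [inter_comm, ← Subtype.image_preimage_coe, ← image_comp]
  exact hembedding.measurableSet_image' (measurable_subtype_coe hs)

lemma exists_map_eq_of_ae_mem_iUnion_image_isCompact (he : Continuous e)
    (he_inj : Function.Injective e) {m : Measure Z} {K : ℕ → Set Y} (hK : ∀ n, IsCompact (K n))
    (hm : ∀ᵐ z ∂m, z ∈ ⋃ n, e '' K n) : ∃ ν : Measure Y, ν.map e = m := by
  have hnull (s : Set Y) (hs : MeasurableSet s) : NullMeasurableSet (e '' s) m := by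
    have hmeas : MeasurableSet (e '' s ∩ ⋃ n, e '' K n) := by
      simp_rw [inter_iUnion, ← image_inter he_inj]
      exact .iUnion fun n ↦ measurableSet_image_inter_of_isCompact he he_inj (hK n) hs
    exact hmeas.nullMeasurableSet.congr
      (inter_ae_eq_left_of_ae_eq_univ (eventuallyEq_univ.2 hm))
  have hrange : range e =ᵐ[m] univ := by
    filter_upwards [hm] with z hz
    obtain ⟨n, y, -, rfl⟩ := mem_iUnion.1 hz
    exact eq_true (mem_range_self y)
  refine ⟨m.comap e, Measure.ext fun A hA ↦ ?_⟩
  rw [Measure.map_apply he.measurable hA, Measure.comap_apply₀ e m he_inj hnull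
    (he.measurable hA).nullMeasurableSet, image_preimage_eq_inter_range]
  exact measure_congr (inter_ae_eq_left_of_ae_eq_univ hrange)

lemma measure_le_ofReal_of_forall_integral_le [NormalSpace Z] {m : Measure Z} [IsFiniteMeasure m]
    [m.InnerRegularCompactLTTop] {V : Set Z} (hV : IsOpen V) {c : ℝ}
    (hc : ∀ f : Z →ᵇ ℝ, 0 ≤ f → f ≤ 1 → EqOn f 0 Vᶜ → ∫ z, f z ∂m ≤ c) :
    m V ≤ ENNReal.ofReal c := by
  rw [hV.measure_eq_biSup_integral_continuous]
  simp only [iSup_le_iff]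
  intro f hf hfV hf_nonneg hf_le
  exact ENNReal.ofReal_le_ofReal <| hc (.mkOfBound ⟨f, hf⟩ 1 fun x y ↦
    Real.dist_le_of_mem_Icc_01 ⟨hf_nonneg x, hf_le x⟩ ⟨hf_nonneg y, hf_le y⟩) hf_nonneg hf_le hfV

theorem exists_isProbabilityMeasure_integral_eq_of_tight [T35Space Y] (Λ : (Y →ᵇ ℝ) →ₗ[ℝ] ℝ)
    (hΛ_nonneg : ∀ f, 0 ≤ f → 0 ≤ Λ f) (hΛ_one : Λ 1 = 1)
    (hΛ_tight : ∀ ε > 0, ∃ K : Set Y, IsCompact K ∧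
      ∀ f : Y →ᵇ ℝ, 0 ≤ f → f ≤ 1 → EqOn f 0 K → Λ f ≤ ε) :
    ∃ ν : Measure Y, IsProbabilityMeasure ν ∧ ∀ f : Y →ᵇ ℝ, ∫ y, f y ∂ν = Λ f := by
  borelize (StoneCech Y)
  have he : Continuous (stoneCechUnit : Y → StoneCech Y) := continuous_stoneCechUnit
  obtain ⟨m, hm_regular, hm_prob, hm⟩ := exists_isProbabilityMeasure_integral_eq_of_compactSpace
    (Λ ∘ₗ (BoundedContinuousFunction.compContinuousCLM ℝ ℝ ⟨stoneCechUnit, he⟩).toLinearMap)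
    (fun f hf ↦ hΛ_nonneg _ fun y ↦ hf (stoneCechUnit y)) hΛ_one
  obtain ⟨ε, -, hε_pos, hε_lim⟩ := exists_seq_strictAnti_tendsto (0 : ℝ)
  choose K hK hKΛ using fun n ↦ hΛ_tight (ε n) (hε_pos n)
  have hm_compl (n : ℕ) : m (stoneCechUnit '' K n)ᶜ ≤ ENNReal.ofReal (ε n) :=
    measure_le_ofReal_of_forall_integral_le ((hK n).image he).isClosed.isOpen_compl
      fun f hf_nonneg hf_le hfK ↦ (hm f).trans_le <| hKΛ n _ (fun y ↦ hf_nonneg (stoneCechUnit y))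
        (fun y ↦ hf_le (stoneCechUnit y)) fun y hy ↦ hfK (not_not.2 (mem_image_of_mem _ hy))
  have hm_ae : ∀ᵐ z ∂m, z ∈ ⋃ n, stoneCechUnit '' K n := by
    rw [ae_iff, ← nonpos_iff_eq_zero, ← ENNReal.ofReal_zero]
    refine ge_of_tendsto' ((ENNReal.continuous_ofReal.tendsto 0).comp hε_lim) fun n ↦ ?_
    exact (measure_mono (compl_subset_compl.2 (subset_iUnion _ n))).trans (hm_compl n)
  obtain ⟨ν, hν⟩ := exists_map_eq_of_ae_mem_iUnion_image_isCompact he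
    injective_stoneCechUnit_of_t35Space hK hm_ae
  have hν_prob : IsProbabilityMeasure (ν.map stoneCechUnit) := hν ▸ hm_prob
  refine ⟨ν, Measure.isProbabilityMeasure_of_map stoneCechUnit, fun f ↦ ?_⟩
  obtain ⟨g, hg⟩ := exists_boundedContinuousFunction_stoneCech f
  calc ∫ y, f y ∂ν = ∫ z, g z ∂ν.map stoneCechUnit := by
        rw [integral_map he.measurable.aemeasurable g.continuous.aestronglyMeasurable]
        simp_rw [hg]
    _ = Λ f := by
        rw [hν, hm]
        exact congrArg Λ (BoundedContinuousFunction.ext hg)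

end TightFunctionals

section FiberUpperIntegral

variable {X Y : Type*} [MeasurableSpace X] {μ : Measure X} {p : Y → X}

lemma le_integral_of_forall_le_comp [IsProbabilityMeasure μ] (hp_ae : ∀ᵐ x ∂μ, x ∈ range p)
    {g : X → ℝ} (hg : Integrable g μ) {c : ℝ} (hc : ∀ y, c ≤ g (p y)) : c ≤ ∫ x, g x ∂μ := by
  calc c = ∫ _, c ∂μ := by rw [integral_const, probReal_univ, one_smul]
    _ ≤ ∫ x, g x ∂μ := by
      refine integral_mono_ae (integrable_const c) hg ?_
      filter_upwards [hp_ae]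
      rintro _ ⟨y, rfl⟩
      exact hc y

variable [TopologicalSpace Y]

/-- The upper integral of `f` along `p`: the infimum of `∫ g ∂μ` over the integrable `g` on the base
with `f ≤ g ∘ p`. The infimum is genuine, that is, over a set bounded below, once `μ`-almost every
point of the base lies in the range of `p`. -/
noncomputable def fiberUpperIntegral (μ : Measure X) (p : Y → X) (f : Y →ᵇ ℝ) : ℝ :=
  ⨅ g : {g : X → ℝ // Integrable g μ ∧ ∀ y, f y ≤ g (p y)}, ∫ x, g.1 x ∂μ

instance nonempty_integrable_majorant [IsFiniteMeasure μ] (f : Y →ᵇ ℝ) :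
    Nonempty {g : X → ℝ // Integrable g μ ∧ ∀ y, f y ≤ g (p y)} :=
  ⟨fun _ ↦ ‖f‖, integrable_const _, f.apply_le_norm⟩

variable [IsProbabilityMeasure μ]

lemma fiberUpperIntegral_le_integral (hp_ae : ∀ᵐ x ∂μ, x ∈ range p) {f : Y →ᵇ ℝ} {g : X → ℝ}
    (hg : Integrable g μ) (hfg : ∀ y, f y ≤ g (p y)) :
    fiberUpperIntegral μ p f ≤ ∫ x, g x ∂μ := by
  refine ciInf_le (f := fun g : {g : X → ℝ // Integrable g μ ∧ ∀ y, f y ≤ g (p y)} ↦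
    ∫ x, g.1 x ∂μ) ⟨-‖f‖, ?_⟩ ⟨g, hg, hfg⟩
  rintro _ ⟨⟨g, hg, hfg⟩, rfl⟩
  exact le_integral_of_forall_le_comp hp_ae hg fun y ↦ (f.neg_norm_le_apply y).trans (hfg y)

lemma fiberUpperIntegral_le_of_forall_le (hp_ae : ∀ᵐ x ∂μ, x ∈ range p) {f : Y →ᵇ ℝ} {c : ℝ}
    (hf : ∀ y, f y ≤ c) : fiberUpperIntegral μ p f ≤ c :=
  (fiberUpperIntegral_le_integral hp_ae (integrable_const c) hf).trans_eq <| by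
    rw [integral_const, probReal_univ, one_smul]

lemma fiberUpperIntegral_le_measureReal_image (hp_ae : ∀ᵐ x ∂μ, x ∈ range p) {f : Y →ᵇ ℝ}
    {F : Set Y} (hf : f ≤ 1) (hfF : EqOn f 0 Fᶜ) :
    fiberUpperIntegral μ p f ≤ μ.real (p '' F) := by
  have hmeas : MeasurableSet (toMeasurable μ (p '' F)) := measurableSet_toMeasurable _ _
  refine (fiberUpperIntegral_le_integral hp_ae
    (g := (toMeasurable μ (p '' F)).indicator 1) ((integrable_const 1).indicator hmeas)
    fun y ↦ ?_).trans_eq ?_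
  · by_cases hy : y ∈ F
    · rw [indicator_of_mem (subset_toMeasurable _ _ (mem_image_of_mem p hy))]
      exact hf y
    · exact (hfF hy).trans_le (indicator_nonneg (fun _ _ ↦ zero_le_one) _)
  · rw [integral_indicator_one hmeas, measureReal_def, measure_toMeasurable, measureReal_def]

lemma isSublinear_fiberUpperIntegral (hp_ae : ∀ᵐ x ∂μ, x ∈ range p) :
    IsSublinear (fiberUpperIntegral μ p) := by
  refine IsSublinear.of_map_smul_le (fun f₁ f₂ ↦ le_ciInf_add_ciInf ?_) fun c hc f ↦ ?_
  · rintro ⟨g₁, hg₁, hfg₁⟩ ⟨g₂, hg₂, hfg₂⟩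
    rw [← integral_add hg₁ hg₂]
    exact fiberUpperIntegral_le_integral hp_ae (hg₁.add hg₂)
      fun y ↦ add_le_add (hfg₁ y) (hfg₂ y)
  · rw [fiberUpperIntegral.eq_def μ p f, Real.mul_iInf_of_nonneg hc.le]
    refine le_ciInf fun ⟨g, hg, hfg⟩ ↦ ?_
    rw [← integral_const_mul]
    exact fiberUpperIntegral_le_integral hp_ae (hg.const_mul c)
      fun y ↦ mul_le_mul_of_nonneg_left (hfg y) hc.le

lemma fiberUpperIntegral_comp_le (hp_ae : ∀ᵐ x ∂μ, x ∈ range p) {S : C(Y, Y)} {T : X → X}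
    (hT : MeasurePreserving T μ μ) (hST : Function.Semiconj p S T) (f : Y →ᵇ ℝ) :
    fiberUpperIntegral μ p (f.compContinuous S) ≤ fiberUpperIntegral μ p f := by
  refine le_ciInf fun ⟨g, hg, hfg⟩ ↦ ?_
  calc fiberUpperIntegral μ p (f.compContinuous S)
      ≤ ∫ x, g (T x) ∂μ :=
        fiberUpperIntegral_le_integral hp_ae (hT.integrable_comp_of_integrable hg)
          fun y ↦ (hfg (S y)).trans_eq (congrArg g (hST y))
    _ = ∫ x, g x ∂μ.map T :=
        (integral_map hT.aemeasurable (hT.map_eq.symm ▸ hg.aestronglyMeasurable)).symm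
    _ = ∫ x, g x ∂μ := by rw [hT.map_eq]

variable {Λ : (Y →ᵇ ℝ) →ₗ[ℝ] ℝ}

lemma nonneg_of_le_fiberUpperIntegral (hp_ae : ∀ᵐ x ∂μ, x ∈ range p)
    (hΛ : ∀ f, Λ f ≤ fiberUpperIntegral μ p f) {f : Y →ᵇ ℝ} (hf : 0 ≤ f) : 0 ≤ Λ f := by
  have h := (hΛ (-f)).trans (fiberUpperIntegral_le_of_forall_le hp_ae fun y ↦ neg_nonpos.2 (hf y))
  rwa [map_neg, neg_nonpos] at h

lemma map_one_of_le_fiberUpperIntegral (hp_ae : ∀ᵐ x ∂μ, x ∈ range p)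
    (hΛ : ∀ f, Λ f ≤ fiberUpperIntegral μ p f) : Λ 1 = 1 := by
  refine le_antisymm ?_ (neg_le_neg_iff.1 ?_)
  · exact (hΛ 1).trans (fiberUpperIntegral_le_of_forall_le hp_ae fun _ ↦ le_rfl)
  · rw [← map_neg]
    exact (hΛ (-1)).trans (fiberUpperIntegral_le_of_forall_le hp_ae fun _ ↦ le_rfl)

end FiberUpperIntegral

section Projection

variable {X Y : Type*} [MeasurableSpace X] {μ : Measure X} [IsProbabilityMeasure μ]
  [TopologicalSpace Y] [PolishSpace Y] [MeasurableSpace Y] [BorelSpace Y] {p : Y → X}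
  {ν : Measure Y}

lemma measure_le_measure_image_of_isOpen [IsFiniteMeasure ν] (hp_ae : ∀ᵐ x ∂μ, x ∈ range p)
    (hν : ∀ f : Y →ᵇ ℝ, ∫ y, f y ∂ν ≤ fiberUpperIntegral μ p f) {V : Set Y} (hV : IsOpen V) :
    ν V ≤ μ (p '' V) := by
  let := TopologicalSpace.upgradeIsCompletelyMetrizable Y
  rw [← ofReal_measureReal (μ := μ)]
  exact measure_le_ofReal_of_forall_integral_le hV fun f _ hf hfV ↦
    (hν f).trans (fiberUpperIntegral_le_measureReal_image hp_ae hf hfV)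

variable [MeasurableSpace.CountablySeparated X]

lemma map_eq_of_integral_le_fiberUpperIntegral [IsProbabilityMeasure ν] (hp : Measurable p)
    (hfib : ∀ᵐ x ∂μ, IsCompact (p ⁻¹' {x})) (hp_ae : ∀ᵐ x ∂μ, x ∈ range p)
    (hν : ∀ f : Y →ᵇ ℝ, ∫ y, f y ∂ν ≤ fiberUpperIntegral μ p f) : ν.map p = μ := by
  let := TopologicalSpace.upgradeIsCompletelyMetrizable Y
  have := Measure.isProbabilityMeasure_map (μ := ν) hp.aemeasurable
  refine Measure.eq_of_le_of_measure_univ_eq (Measure.le_iff.2 fun A hA ↦ ?_) (by simp)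
  rw [Measure.map_apply hp hA,
    (hp hA).measure_eq_iSup_isClosed_of_ne_top (measure_ne_top ν _)]
  refine iSup₂_le fun F hFA ↦ iSup_le fun hF ↦ ?_
  calc ν F ≤ μ (p '' F) := measure_le_measure_image_of_isClosed hp hfib
        (fun _ ↦ measure_le_measure_image_of_isOpen hp_ae hν) hF
    _ ≤ μ A := measure_mono (image_subset_iff.2 hFA)

theorem exists_isProbabilityMeasure_map_eq_of_le_fiberUpperIntegral (hp : Measurable p)
    (hfib : ∀ᵐ x ∂μ, IsCompact (p ⁻¹' {x})) (hp_ae : ∀ᵐ x ∂μ, x ∈ range p)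
    {Λ : (Y →ᵇ ℝ) →ₗ[ℝ] ℝ} (hΛ : ∀ f, Λ f ≤ fiberUpperIntegral μ p f) :
    ∃ ν : Measure Y, IsProbabilityMeasure ν ∧ (∀ f : Y →ᵇ ℝ, ∫ y, f y ∂ν = Λ f) ∧
      ν.map p = μ := by
  obtain ⟨ν, hν_prob, hν⟩ := exists_isProbabilityMeasure_integral_eq_of_tight Λ
    (fun _ ↦ nonneg_of_le_fiberUpperIntegral hp_ae hΛ)
    (map_one_of_le_fiberUpperIntegral hp_ae hΛ) fun ε hε ↦ by
      obtain ⟨K, hK, hKε⟩ := exists_isCompact_measure_image_compl_le hp hfib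
        (ENNReal.ofReal_pos.2 hε).ne'
      refine ⟨K, hK, fun f _ hf hfK ↦ (hΛ f).trans ?_⟩
      exact (fiberUpperIntegral_le_measureReal_image hp_ae hf (by rwa [compl_compl])).trans
        (ENNReal.toReal_le_of_le_ofReal hε.le hKε)
  exact ⟨ν, hν_prob, hν, map_eq_of_integral_le_fiberUpperIntegral hp hfib hp_ae
    fun f ↦ (hν f).trans_le (hΛ f)⟩

end Projection

theorem lift_invariant_measure_comm_monoid_general {X Y ι : Type*} [MeasurableSpace X]
    [MeasurableSpace.CountablySeparated X] (μ : Measure X) [IsProbabilityMeasure μ]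
    [TopologicalSpace Y] [PolishSpace Y] [MeasurableSpace Y] [BorelSpace Y]
    (p : Y → X) (hp : Measurable p) (hfull : μ (range p) = 1)
    (hfib : ∀ᵐ x ∂μ, IsCompact (p ⁻¹' {x})) (S : ι → C(Y, Y)) (T : ι → X → X)
    (hSS : ∀ i j, Function.Commute (S i) (S j)) (hT : ∀ i, MeasurePreserving (T i) μ μ)
    (hST : ∀ i, Function.Semiconj p (S i) (T i)) :
    ∃ ν : Measure Y, IsProbabilityMeasure ν ∧ (∀ i, ν.map (S i) = ν) ∧ ν.map p = μ := by
  have hp_ae : ∀ᵐ x ∂μ, x ∈ range p :=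
    (mem_ae_iff_prob_eq_one₀ (image_univ ▸ nullMeasurableSet_image hp .univ)).2 hfull
  let U (i : ι) : Module.End ℝ (Y →ᵇ ℝ) :=
    (BoundedContinuousFunction.compContinuousCLM ℝ ℝ (S i)).toLinearMap
  obtain ⟨Λ, hΛ_inv, hΛ⟩ := exists_invariant_linearMap_le (U := U)
    (isSublinear_fiberUpperIntegral hp_ae)
    (fun i j ↦ LinearMap.ext fun f ↦ BoundedContinuousFunction.ext fun y ↦
      congrArg f (hSS j i y))
    (fun i ↦ fiberUpperIntegral_comp_le hp_ae (hT i) (hST i))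
  obtain ⟨ν, hν_prob, hν, hν_map⟩ :=
    exists_isProbabilityMeasure_map_eq_of_le_fiberUpperIntegral hp hfib hp_ae hΛ
  refine ⟨ν, hν_prob, fun i ↦ ext_of_forall_integral_eq_of_IsFiniteMeasure fun f ↦ ?_, hν_map⟩
  calc ∫ y, f y ∂ν.map (S i) = ∫ y, U i f y ∂ν :=
        integral_map (S i).measurable.aemeasurable f.continuous.aestronglyMeasurable
    _ = ∫ y, f y ∂ν := by rw [hν, hν, hΛ_inv]

/-- **Theorem 1.2** (commutative-monoid case). Let `X` be a standard Borel space with a Borel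
probability measure `μ`, `Y` a Polish space, and `p : Y → X` a Borel map with `μ (range p) = 1`
whose fibers are compact for `μ`-a.e. `x`. Let a commutative monoid `Γ` act on `Y` by continuous
maps and on `X` by `μ`-preserving measurable maps, the actions commuting with `p`. Then there is
a `Γ`-invariant Borel probability measure `ν` on `Y` with `ν.map p = μ`. -/
theorem lift_invariant_measure_comm_monoid
    {X : Type*} [MeasurableSpace X] [StandardBorelSpace X]
    (μ : Measure X) [IsProbabilityMeasure μ]
    {Y : Type*} [TopologicalSpace Y] [PolishSpace Y] [MeasurableSpace Y] [BorelSpace Y]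
    (p : Y → X) (hp : Measurable p)
    (hfull : μ (Set.range p) = 1)
    (hfib : ∀ᵐ x ∂μ, IsCompact (p ⁻¹' {x}))
    {Γ : Type*} [CommMonoid Γ] [MulAction Γ Y] [MulAction Γ X]
    (hScont : ∀ γ : Γ, Continuous (fun y : Y => γ • y))
    (hTmeas : ∀ γ : Γ, Measurable (fun x : X => γ • x))
    (hTμ : ∀ γ : Γ, μ.map (fun x : X => γ • x) = μ)
    (hcomm : ∀ (γ : Γ) (y : Y), p (γ • y) = γ • (p y)) :
    ∃ ν : Measure Y, IsProbabilityMeasure ν ∧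
      (∀ γ : Γ, ν.map (fun y : Y => γ • y) = ν) ∧ ν.map p = μ :=
  lift_invariant_measure_comm_monoid_general μ p hp hfull hfib (fun γ ↦ ⟨(γ • ·), hScont γ⟩)
    (fun γ ↦ (γ • ·)) smul_comm (fun γ ↦ ⟨hTmeas γ, hTμ γ⟩) hcomm
end

section
/- Let $X$ be a standard Borel space with a Borel probability measure $\mu$, let $Y$ be a Polish space, and let $p: Y \to X$ be a Borel map such that $\mu(p(Y)) = 1$. Let $M \subset P(Y)$ be the set of all Borel probability measures $\sigma$ on $Y$ with $p_*\sigma = \mu$. If for $\mu$-almost all $x \in X$ the fiber $p^{-1}(x)$ is compact, then $M$ is a non-empty convex compact subset of $P(Y)$ (with respect to the weak* topology on $P(Y)$). -/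
open MeasureTheory
open scoped ENNReal NNReal

/-!
Let `x ↦ p ⁻¹' {x}` be the fiber map. For open `U` the set of `x` whose fiber lies in `U` is the
complement of the analytic set `p '' Uᶜ`, hence is `μ`-measurable. Letting `U` run over the finite
unions of basic open sets and refining the topology of `X`, these countably many sets become open
up to a null set, so the fiber map is upper hemicontinuous on compact sets `C` of measure
arbitrarily close to that of any given Borel set, and then `p ⁻¹' C` is compact. Therefore the lifts
of `μ` form a tight set, which is cut out by the closed conditions `μ C ≤ σ (p ⁻¹' C)`, and
Prokhorov's theorem gives compactness. A lift exists because `p` has a measurable section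
almost everywhere, which picks the leftmost preimage in a parametrization of `Y` by `ℕ → ℕ`.
-/

open Set Filter Topology TopologicalSpace

section AnalyticSets

/-- The sequences bounded by `k` in their first `n` coordinates only. As `n` grows these sets
decrease to the compact box `Iic k`, and they approximate it from outside in Lusin's theorem on
analytic sets. -/
def initialBox (k : ℕ → ℕ) (n : ℕ) : Set (ℕ → ℕ) :=
  {a | ∀ i < n, a i ≤ k i}

lemma antitone_initialBox (k : ℕ → ℕ) : Antitone (initialBox k) :=
  fun _ _ hmn _ ha i hi ↦ ha i (hi.trans_le hmn)

lemma exists_initialBox_subset_of_isOpen {k : ℕ → ℕ} {V : Set (ℕ → ℕ)} (hV : IsOpen V)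
    (hkV : Iic k ⊆ V) : ∃ n, initialBox k n ⊆ V := by
  let := PiNat.metricSpaceNatNat
  have hcompact : IsCompact (Iic k) := Icc_bot (a := k) ▸ isCompact_Icc
  obtain ⟨δ, hδ, hδV⟩ := hcompact.exists_thickening_subset_open hV hkV
  obtain ⟨n, hn⟩ := exists_pow_lt_of_lt_one hδ one_half_lt_one
  refine ⟨n, fun a ha ↦ hδV (Metric.mem_thickening_iff.2 ⟨a ⊓ k, mem_Iic.2 inf_le_right, ?_⟩)⟩
  refine (PiNat.mem_cylinder_iff_dist_le.1 fun i hi ↦ ?_).trans_lt hn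
  exact (inf_eq_left.2 (ha i hi)).symm

lemma iInter_closure_image_initialBox_subset {X : Type*} [TopologicalSpace X] [T2Space X]
    {f : (ℕ → ℕ) → X} (hf : Continuous f) (k : ℕ → ℕ) :
    ⋂ n, closure (f '' initialBox k n) ⊆ f '' Iic k := by
  intro x hx
  by_contra hxk
  have hcompact : IsCompact (Iic k) := Icc_bot (a := k) ▸ isCompact_Icc
  obtain ⟨U, V, hU, hV, hkU, hxV, hUV⟩ := (hcompact.image hf).separation_of_notMem hxk
  obtain ⟨n, hn⟩ := exists_initialBox_subset_of_isOpen (hU.preimage hf) (image_subset_iff.1 hkU)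
  have hxU : x ∈ closure U := closure_mono (image_subset_iff.2 hn) (mem_iInter.1 hx n)
  exact (hUV.closure_left hV).le_bot ⟨hxU, hxV⟩

lemma exists_forall_lt_measure_image_initialBox {X : Type*} [MeasurableSpace X] (μ : Measure X)
    (f : (ℕ → ℕ) → X) {t : ℝ≥0∞} (ht : t < μ (range f)) :
    ∃ k, ∀ n, t < μ (f '' initialBox k n) := by
  have hstep (S : {S : Set (ℕ → ℕ) // t < μ (f '' S)}) (n : ℕ) :
      ∃ m, t < μ (f '' (S ∩ {a | a n ≤ m})) := by
    have hmono : Monotone fun m ↦ f '' (S ∩ {a : ℕ → ℕ | a n ≤ m}) :=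
      fun m m' h ↦ image_mono (inter_subset_inter_right _ fun a ha ↦ le_trans ha h)
    have hunion : ⋃ m, f '' (S ∩ {a : ℕ → ℕ | a n ≤ m}) = f '' S := by
      rw [← image_iUnion, ← inter_iUnion, iUnion_eq_univ_iff.2 fun a ↦ ⟨a n, le_refl (a n)⟩,
        inter_univ]
    have := S.2
    rwa [← hunion, hmono.measure_iUnion, lt_iSup_iff] at this
  choose m hm using hstep
  let S : ℕ → {S : Set (ℕ → ℕ) // t < μ (f '' S)} := fun n ↦
    Nat.rec ⟨univ, by rwa [image_univ]⟩ (fun n S ↦ ⟨S ∩ {a | a n ≤ m S n}, hm S n⟩) n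
  have hS (n : ℕ) : (S n).1 = initialBox (fun i ↦ m (S i) i) n := by
    induction n with
    | zero => simp [S, initialBox]
    | succ n ih =>
      change (S n).1 ∩ {a | a n ≤ m (S n) n} = _
      rw [ih]
      ext a
      exact Nat.forall_lt_succ_right.symm
  exact ⟨fun i ↦ m (S i) i, fun n ↦ hS n ▸ (S n).2⟩

variable {X : Type*} [TopologicalSpace X] [T2Space X] [MeasurableSpace X] [BorelSpace X]
  (μ : Measure X) [IsFiniteMeasure μ]

lemma exists_isCompact_subset_range_le_measure {f : (ℕ → ℕ) → X} (hf : Continuous f) {t : ℝ≥0∞}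
    (ht : t < μ (range f)) : ∃ K ⊆ range f, IsCompact K ∧ t ≤ μ K := by
  obtain ⟨k, hk⟩ := exists_forall_lt_measure_image_initialBox μ f ht
  have hcompact : IsCompact (Iic k) := Icc_bot (a := k) ▸ isCompact_Icc
  refine ⟨f '' Iic k, image_subset_range _ _, hcompact.image hf, ?_⟩
  have hlim := tendsto_measure_iInter_atTop (μ := μ)
    (fun n ↦ (isClosed_closure (s := f '' initialBox k n)).measurableSet.nullMeasurableSet)
    (fun _ _ hmn ↦ closure_mono (image_mono (antitone_initialBox k hmn)))
    ⟨0, measure_ne_top _ _⟩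
  calc t ≤ μ (⋂ n, closure (f '' initialBox k n)) :=
        ge_of_tendsto' hlim fun n ↦ (hk n).le.trans (measure_mono subset_closure)
    _ ≤ μ (f '' Iic k) := measure_mono (iInter_closure_image_initialBox_subset hf k)

lemma nullMeasurableSet_of_analyticSet_s2 {s : Set X} (hs : AnalyticSet s) :
    NullMeasurableSet s μ := by
  rw [AnalyticSet] at hs
  obtain rfl | ⟨f, hf, rfl⟩ := hs
  · exact .empty
  rcases eq_zero_or_pos (μ (range f)) with hzero | hpos
  · exact .of_null hzero
  obtain ⟨t, -, ht, hlim⟩ := exists_seq_strictMono_tendsto' hpos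
  choose K hKf hK htK using fun n ↦ exists_isCompact_subset_range_le_measure μ hf (ht n).2
  have hunion : NullMeasurableSet (⋃ n, K n) μ :=
    .iUnion fun n ↦ (hK n).measurableSet.nullMeasurableSet
  refine hunion.congr (ae_eq_of_subset_of_measure_ge (iUnion_subset hKf) ?_ hunion
    (measure_ne_top _ _))
  exact le_of_tendsto' hlim fun n ↦ (htK n).trans (measure_mono (subset_iUnion K n))

end AnalyticSets

lemma nullMeasurableSet_image_of_measurable {X Y : Type*} [MeasurableSpace X]
    [StandardBorelSpace X] [MeasurableSpace Y] [StandardBorelSpace Y] {p : Y → X}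
    (hp : Measurable p) {s : Set Y} (hs : MeasurableSet s) (μ : Measure X) [IsFiniteMeasure μ] :
    NullMeasurableSet (p '' s) μ := by
  let := upgradeStandardBorel X
  exact nullMeasurableSet_of_analyticSet_s2 μ (hs.analyticSet_image hp)

section Selection

/-- The cylinder of sequences with initial segment `l`, indexing the scheme from which the leftmost
branch is built. As in `PiNat.res`, `l` lists the digits in reverse order, so that `m :: l` extends
`l` by the next digit `m`. -/
def listCylinder (l : List ℕ) : Set (ℕ → ℕ) :=
  {a | PiNat.res a l.length = l}

/-- The smallest digit extending the initial segment `l` to one of a preimage of `x` under `f`,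
with the junk value `0 = sInf ∅` if there is none. -/
noncomputable def leastDigit {X : Type*} (f : (ℕ → ℕ) → X) (x : X) (l : List ℕ) : ℕ :=
  sInf {m | x ∈ f '' listCylinder (m :: l)}

/-- The first `n` digits, in reverse order, of the leftmost branch of the tree of initial segments
of preimages of `x`. -/
noncomputable def leftmostSegment {X : Type*} (f : (ℕ → ℕ) → X) (x : X) : ℕ → List ℕ
  | 0 => []
  | n + 1 => leastDigit f x (leftmostSegment f x n) :: leftmostSegment f x n

/-- The lexicographically least preimage of `x` under `f`, for continuous `f` and `x ∈ range f`: the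
selection function of the Jankov–von Neumann uniformization theorem. -/
noncomputable def leftmostBranch {X : Type*} (f : (ℕ → ℕ) → X) (x : X) (n : ℕ) : ℕ :=
  leastDigit f x (leftmostSegment f x n)

variable {X : Type*} {f : (ℕ → ℕ) → X}

lemma mem_image_listCylinder_leastDigit_cons {x : X} {l : List ℕ}
    (hx : x ∈ f '' listCylinder l) : x ∈ f '' listCylinder (leastDigit f x l :: l) := by
  obtain ⟨a, ha, rfl⟩ := hx
  have hnext : {m | f a ∈ f '' listCylinder (m :: l)}.Nonempty :=
    ⟨a l.length, a, congrArg (a l.length :: ·) ha, rfl⟩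
  exact Nat.sInf_mem hnext

lemma mem_image_listCylinder_leftmostSegment {x : X} (hx : x ∈ range f) (n : ℕ) :
    x ∈ f '' listCylinder (leftmostSegment f x n) := by
  induction n with
  | zero =>
    obtain ⟨a, rfl⟩ := hx
    exact mem_image_of_mem f rfl
  | succ n ih => exact mem_image_listCylinder_leastDigit_cons ih

lemma res_leftmostBranch (f : (ℕ → ℕ) → X) (x : X) (n : ℕ) :
    PiNat.res (leftmostBranch f x) n = leftmostSegment f x n := by
  induction n with
  | zero => rfl
  | succ n ih => rw [PiNat.res_succ, ih]; rfl

lemma apply_leftmostBranch [TopologicalSpace X] [T1Space X] (hf : Continuous f) {x : X}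
    (hx : x ∈ range f) : f (leftmostBranch f x) = x := by
  have happrox (n : ℕ) : ∃ a, f a = x ∧ ∀ i < n, a i = leftmostBranch f x i := by
    obtain ⟨a, ha, hax⟩ := mem_image_listCylinder_leftmostSegment hx n
    rw [← res_leftmostBranch, listCylinder, mem_ofPred_eq, PiNat.res_length, PiNat.res_eq_res] at ha
    exact ⟨a, hax, ha⟩
  choose a hax ha using happrox
  have hlim : Tendsto a atTop (𝓝 (leftmostBranch f x)) :=
    tendsto_pi_nhds.2 fun i ↦ tendsto_const_nhds.congr' <|
      (eventually_gt_atTop i).mono fun n hn ↦ (ha n i hn).symm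
  exact (isClosed_singleton.preimage hf).mem_of_tendsto hlim (.of_forall hax)

lemma measurable_sInf_setOf_mem [MeasurableSpace X] {A : ℕ → Set X}
    (hA : ∀ m, MeasurableSet (A m)) : Measurable fun x ↦ sInf {m | x ∈ A m} := by
  refine measurable_of_Iic fun n ↦ ?_
  have hIic : (fun x ↦ sInf {m | x ∈ A m}) ⁻¹' Iic n = (⋃ m ≤ n, A m) ∪ (⋃ m, A m)ᶜ := by
    ext x
    by_cases hx : ∃ m, x ∈ A m
    · have hsInf : sInf {m | x ∈ A m} ≤ n ↔ ∃ m ≤ n, x ∈ A m :=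
        ⟨fun h ↦ ⟨_, h, Nat.sInf_mem hx⟩, fun ⟨_, hmn, hm⟩ ↦ (Nat.sInf_le hm).trans hmn⟩
      simpa [not_forall_not.2 hx] using hsInf
    · simp [not_exists.1 hx]
  rw [hIic]
  exact (MeasurableSet.biUnion (to_countable _) fun m _ ↦ hA m).union
    (MeasurableSet.iUnion hA).compl

lemma measurableSet_leftmostSegment_eq [MeasurableSpace X]
    (hf : ∀ l, MeasurableSet (f '' listCylinder l)) (n : ℕ) (l : List ℕ) :
    MeasurableSet {x | leftmostSegment f x n = l} := by
  induction n generalizing l with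
  | zero => exact .const ([] = l)
  | succ n ih =>
    cases l with
    | nil => simp [leftmostSegment]
    | cons m l =>
      have hsplit : {x | leftmostSegment f x (n + 1) = m :: l} =
          {x | leftmostSegment f x n = l} ∩ (fun x ↦ leastDigit f x l) ⁻¹' {m} := by
        ext x
        simp only [leftmostSegment, List.cons.injEq]
        grind
      rw [hsplit]
      exact (ih l).inter (measurable_sInf_setOf_mem (fun m ↦ hf (m :: l)) (.singleton m))

lemma measurable_leftmostBranch [MeasurableSpace X]
    (hf : ∀ l, MeasurableSet (f '' listCylinder l)) : Measurable (leftmostBranch f) := by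
  refine measurable_pi_iff.2 fun n ↦ measurable_to_countable' fun m ↦ ?_
  have hfiber : (fun x ↦ leftmostBranch f x n) ⁻¹' {m} =
      ⋃ l, {x | leftmostSegment f x (n + 1) = m :: l} := by
    ext x
    simp [leftmostSegment, leftmostBranch]
  rw [hfiber]
  exact .iUnion fun l ↦ measurableSet_leftmostSegment_eq hf (n + 1) (m :: l)

lemma measurableSet_listCylinder (l : List ℕ) : MeasurableSet (listCylinder l) := by
  induction l with
  | nil => simp [listCylinder]
  | cons m l ih =>
    have hsplit : listCylinder (m :: l) = {a | a l.length = m} ∩ listCylinder l := by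
      ext a
      simp [listCylinder, PiNat.res_succ]
    rw [hsplit]
    exact (measurableSet_eq_fun (measurable_pi_apply _) measurable_const).inter ih

end Selection

lemma exists_polishSpace_forall_isOpen {X ι : Type*} [MeasurableSpace X] [StandardBorelSpace X]
    [Countable ι] {A : ι → Set X} (hA : ∀ i, MeasurableSet (A i)) :
    ∃ _ : TopologicalSpace X, PolishSpace X ∧ BorelSpace X ∧ ∀ i, IsOpen (A i) := by
  let t₀ := upgradeStandardBorel X
  choose T hT hTP _ hTopen using fun i ↦ (hA i).isClopenable
  obtain ⟨t, htT, ht, htP⟩ := PolishSpace.exists_polishSpace_forall_le T hT hTP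
  refine ⟨t, htP, ⟨?_⟩, fun i ↦ htT i _ (hTopen i)⟩
  rw [borel_eq_borel_of_le htP t₀.toPolishSpace ht]
  exact t₀.toBorelSpace.measurable_eq

lemma exists_measurable_ae_rightInverse {X Y : Type*} [MeasurableSpace X] [StandardBorelSpace X]
    [MeasurableSpace Y] [StandardBorelSpace Y] [Nonempty Y] (μ : Measure X) [IsFiniteMeasure μ]
    {p : Y → X} (hp : Measurable p) (hrange : ∀ᵐ x ∂μ, x ∈ range p) :
    ∃ s : X → Y, Measurable s ∧ ∀ᵐ x ∂μ, p (s x) = x := by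
  let := upgradeStandardBorel X
  have hcount : Countable (countableBasis X) := (countable_countableBasis X).to_subtype
  obtain ⟨_, _, _, hopen⟩ := exists_polishSpace_forall_isOpen fun U : countableBasis X ↦
    hp (isOpen_of_mem_countableBasis U.2).measurableSet
  have hpc : Continuous p :=
    (isBasis_countableBasis X).continuous_iff.2 fun U hU ↦ hopen ⟨U, hU⟩
  obtain ⟨g, hg, hgsurj⟩ := PolishSpace.exists_nat_nat_continuous_surjective Y
  have hbranch : AEMeasurable (leftmostBranch (p ∘ g)) μ := by
    refine NullMeasurable.aemeasurable fun S hS ↦ ?_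
    exact measurable_leftmostBranch (X := NullMeasurableSpace X μ) (fun l ↦
      nullMeasurableSet_image_of_measurable (hp.comp hg.measurable)
        (measurableSet_listCylinder l) μ) hS
  refine ⟨g ∘ hbranch.mk, hg.measurable.comp hbranch.measurable_mk, ?_⟩
  filter_upwards [hrange, hbranch.ae_eq_mk] with x hx hmk
  rw [Function.comp_apply, ← hmk]
  exact apply_leftmostBranch (hpc.comp hg) (hgsurj.range_comp p ▸ hx)

section CompactFibers

lemma isCompact_biUnion_of_upperHemicontinuousOn {X Y : Type*} [TopologicalSpace X]
    [TopologicalSpace Y] {S : X → Set Y} {C : Set X} (hC : IsCompact C)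
    (hS : ∀ x ∈ C, IsCompact (S x)) (hSC : UpperHemicontinuousOn S C) :
    IsCompact (⋃ x ∈ C, S x) := by
  refine isCompact_of_finite_subcover fun {ι} U hU hcover ↦ ?_
  refine hC.induction_on (p := fun D ↦ ∃ t : Finset ι, ⋃ x ∈ D, S x ⊆ ⋃ i ∈ t, U i)
    ⟨∅, by simp⟩ (fun D E hDE ⟨t, ht⟩ ↦ ⟨t, (biUnion_mono hDE fun _ _ ↦ subset_rfl).trans ht⟩)
    ?union ?nhds
  case union =>
    classical
    rintro D E ⟨t, ht⟩ ⟨u, hu⟩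
    refine ⟨t ∪ u, ?_⟩
    rw [biUnion_union, Finset.set_biUnion_union]
    exact union_subset_union ht hu
  case nhds =>
    intro x hx
    obtain ⟨t, ht⟩ := (hS x hx).elim_finite_subcover U hU
      ((subset_biUnion_of_mem hx).trans hcover)
    have hnhds : ∀ᶠ x' in 𝓝[C] x, S x' ⊆ ⋃ i ∈ t, U i :=
      hSC.forall_isOpen x hx _ (isOpen_biUnion fun i _ ↦ hU i) ht
    exact ⟨_, hnhds, t, iUnion₂_subset fun _ hx' ↦ hx'⟩

lemma exists_finset_subset_of_isTopologicalBasis {Y : Type*} [TopologicalSpace Y]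
    {b : Set (Set Y)} (hb : IsTopologicalBasis b) {K V : Set Y} (hK : IsCompact K)
    (hV : IsOpen V) (hKV : K ⊆ V) :
    ∃ F : Finset b, K ⊆ ⋃ U ∈ F, (U : Set Y) ∧ ⋃ U ∈ F, (U : Set Y) ⊆ V := by
  have hcover : K ⊆ ⋃ U ∈ {U : b | (U : Set Y) ⊆ V}, (U : Set Y) := fun y hy ↦ by
    obtain ⟨U, hU, hyU, hUV⟩ := hb.exists_subset_of_mem_open (hKV hy) hV
    exact mem_biUnion (x := ⟨U, hU⟩) hUV hyU
  obtain ⟨F, hFV, hF, hKF⟩ := hK.elim_finite_subcover_image (fun U _ ↦ hb.isOpen U.2) hcover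
  lift F to Finset b using hF
  exact ⟨F, hKF, iUnion₂_subset hFV⟩

lemma exists_measurableSet_isCompact_biUnion {X Y : Type*} [MeasurableSpace X]
    [StandardBorelSpace X] [TopologicalSpace Y] [SecondCountableTopology Y]
    (μ : Measure X) [IsFiniteMeasure μ] {S : X → Set Y} (hS : ∀ᵐ x ∂μ, IsCompact (S x))
    (hSnull : ∀ U, IsOpen U → NullMeasurableSet {x | S x ⊆ U} μ)
    {B : Set X} (hB : MeasurableSet B) {ε : ℝ≥0∞} (hε : ε ≠ 0) :
    ∃ C ⊆ B, MeasurableSet C ∧ IsCompact (⋃ x ∈ C, S x) ∧ μ B ≤ μ C + ε := by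
  have hcount : Countable (countableBasis Y) := (countable_countableBasis Y).to_subtype
  let U (F : Finset (countableBasis Y)) : Set Y := ⋃ V ∈ F, V
  have hU (F) : IsOpen (U F) := isOpen_biUnion fun V _ ↦ isOpen_of_mem_countableBasis V.2
  choose A _ hA hAS using fun F ↦ (hSnull (U F) (hU F)).exists_measurable_subset_ae_eq
  obtain ⟨_, _, _, hAopen⟩ := exists_polishSpace_forall_isOpen hA
  have hgood : ∀ᵐ x ∂μ, IsCompact (S x) ∧ ∀ F, x ∈ A F ↔ S x ⊆ U F :=
    hS.and (ae_all_iff.2 fun F ↦ (hAS F).mem_iff)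
  obtain ⟨G, hGae, hG, hGgood⟩ := hgood.exists_measurable_mem
  obtain ⟨C, hCBG, hC, hCε⟩ :=
    (hB.inter hG).exists_isCompact_lt_add (measure_ne_top μ _) hε
  have hCgood (x) (hx : x ∈ C) := hGgood x (hCBG hx).2
  have husc : UpperHemicontinuousOn S C := by
    refine .of_forall_isOpen fun x hx V hV hxV ↦ ?_
    obtain ⟨F, hxF, hFV⟩ := exists_finset_subset_of_isTopologicalBasis
      (isBasis_countableBasis Y) (hCgood x hx).1 hV hxV
    have hAnhds : A F ∈ 𝓝[C] x :=
      mem_nhdsWithin_of_mem_nhds ((hAopen F).mem_nhds (((hCgood x hx).2 F).2 hxF))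
    filter_upwards [hAnhds, self_mem_nhdsWithin] with x' hx'A hx'C
    exact (((hCgood x' hx'C).2 F).1 hx'A).trans hFV
  refine ⟨C, hCBG.trans inter_subset_left, hC.measurableSet,
    isCompact_biUnion_of_upperHemicontinuousOn hC (fun x hx ↦ (hCgood x hx).1) husc, ?_⟩
  rw [← measure_inter_conull (mem_ae_iff.1 hGae)]
  exact hCε.le

lemma exists_measurableSet_isCompact_preimage {X Y : Type*} [MeasurableSpace X]
    [StandardBorelSpace X] [TopologicalSpace Y] [PolishSpace Y] [MeasurableSpace Y] [BorelSpace Y]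
    (μ : Measure X) [IsFiniteMeasure μ] {p : Y → X} (hp : Measurable p)
    (hfib : ∀ᵐ x ∂μ, IsCompact (p ⁻¹' {x})) {B : Set X} (hB : MeasurableSet B) {ε : ℝ≥0∞}
    (hε : ε ≠ 0) : ∃ C ⊆ B, MeasurableSet C ∧ IsCompact (p ⁻¹' C) ∧ μ B ≤ μ C + ε := by
  have hnull (U : Set Y) (hU : IsOpen U) : NullMeasurableSet {x | p ⁻¹' {x} ⊆ U} μ := by
    have himage : {x | p ⁻¹' {x} ⊆ U} = (p '' Uᶜ)ᶜ := kernImage_eq_compl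
    rw [himage]
    exact (nullMeasurableSet_image_of_measurable hp hU.measurableSet.compl μ).compl
  simpa only [biUnion_preimage_singleton] using
    exists_measurableSet_isCompact_biUnion μ hfib hnull hB hε

end CompactFibers

lemma isClosed_setOf_le_measure {Y : Type*} [TopologicalSpace Y] [MeasurableSpace Y]
    [OpensMeasurableSpace Y] [HasOuterApproxClosed Y] {F : Set Y} (hF : IsClosed F) (c : ℝ≥0∞) :
    IsClosed {σ : ProbabilityMeasure Y | c ≤ (σ : Measure Y) F} := by
  refine isClosed_iff_ultrafilter.2 fun σ 𝒰 hlim hmem ↦ ?_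
  calc c ≤ limsup (fun τ : ProbabilityMeasure Y ↦ (τ : Measure Y) F) 𝒰 :=
        le_limsup_of_frequently_le' (Eventually.frequently hmem)
    _ ≤ (σ : Measure Y) F := ProbabilityMeasure.limsup_measure_closed_le_of_tendsto hlim hF

section Lifts

variable {X Y : Type*} [MeasurableSpace X] [MeasurableSpace Y]

/-- The set `M` of lifts of `μ` through `p`: the Borel probability measures `σ` with `p_* σ = μ`.
It is a set in `ProbabilityMeasure Y`, which carries the weak* topology. -/
def measureLifts (μ : Measure X) (p : Y → X) : Set (ProbabilityMeasure Y) :=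
  {σ | σ.toMeasure.map p = μ}

variable {μ : Measure X} {p : Y → X}

lemma measure_preimage_of_mem_measureLifts {σ : ProbabilityMeasure Y} (hσ : σ ∈ measureLifts μ p)
    (hp : Measurable p) {B : Set X} (hB : MeasurableSet B) : σ.toMeasure (p ⁻¹' B) = μ B := by
  rw [← Measure.map_apply hp hB, show σ.toMeasure.map p = μ from hσ]

lemma mem_measureLifts_of_toMeasure_eq (hp : Measurable p) {σ τ ρ : ProbabilityMeasure Y}
    (hσ : σ ∈ measureLifts μ p) (hτ : τ ∈ measureLifts μ p) {a b : ℝ≥0∞} (hab : a + b = 1)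
    (hρ : ρ.toMeasure = a • σ.toMeasure + b • τ.toMeasure) : ρ ∈ measureLifts μ p := by
  rw [measureLifts, mem_ofPred_eq] at hσ hτ ⊢
  rw [hρ, Measure.map_add _ _ hp, Measure.map_smul, Measure.map_smul, hσ, hτ, ← add_smul, hab,
    one_smul]

lemma measureLifts_nonempty [StandardBorelSpace X] [StandardBorelSpace Y] [IsProbabilityMeasure μ]
    (hp : Measurable p) (hrange : ∀ᵐ x ∂μ, x ∈ range p) : (measureLifts μ p).Nonempty := by
  obtain ⟨_, y, _⟩ := hrange.exists
  have : Nonempty Y := ⟨y⟩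
  obtain ⟨s, hs, hps⟩ := exists_measurable_ae_rightInverse μ hp hrange
  refine ⟨⟨μ.map s, Measure.isProbabilityMeasure_map hs.aemeasurable⟩, ?_⟩
  calc (μ.map s).map p = μ.map (p ∘ s) := Measure.map_map hp hs
    _ = μ.map id := Measure.map_congr hps
    _ = μ := Measure.map_id

variable [StandardBorelSpace X] [TopologicalSpace Y] [PolishSpace Y] [BorelSpace Y]

lemma isTightMeasureSet_measureLifts [IsFiniteMeasure μ] (hp : Measurable p)
    (hfib : ∀ᵐ x ∂μ, IsCompact (p ⁻¹' {x})) :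
    IsTightMeasureSet {(σ : Measure Y) | σ ∈ measureLifts μ p} := by
  refine isTightMeasureSet_iff_exists_isCompact_measure_compl_le.2 fun ε hε ↦ ?_
  obtain ⟨C, -, hC, hpC, hCε⟩ :=
    exists_measurableSet_isCompact_preimage μ hp hfib MeasurableSet.univ hε.ne'
  refine ⟨p ⁻¹' C, hpC, ?_⟩
  rintro _ ⟨σ, hσ, rfl⟩
  rw [← preimage_compl, measure_preimage_of_mem_measureLifts hσ hp hC.compl,
    measure_compl hC (measure_ne_top μ C)]
  exact tsub_le_iff_left.2 hCε

lemma mem_measureLifts_of_forall_isCompact_preimage [IsProbabilityMeasure μ] (hp : Measurable p)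
    (hfib : ∀ᵐ x ∂μ, IsCompact (p ⁻¹' {x})) {σ : ProbabilityMeasure Y}
    (hσ : ∀ C, MeasurableSet C → IsCompact (p ⁻¹' C) → μ C ≤ σ.toMeasure (p ⁻¹' C)) :
    σ ∈ measureLifts μ p := by
  have : IsProbabilityMeasure (σ.toMeasure.map p) :=
    Measure.isProbabilityMeasure_map hp.aemeasurable
  refine (Measure.eq_of_le_of_isProbabilityMeasure (Measure.le_iff.2 fun B hB ↦ ?_)).symm
  refine ENNReal.le_of_forall_pos_le_add fun ε hε _ ↦ ?_
  obtain ⟨C, hCB, hC, hpC, hCε⟩ := exists_measurableSet_isCompact_preimage μ hp hfib hB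
    (ENNReal.coe_ne_zero.2 hε.ne')
  calc μ B ≤ μ C + ε := hCε
    _ ≤ σ.toMeasure (p ⁻¹' B) + ε := by
        gcongr
        exact (hσ C hC hpC).trans (measure_mono (preimage_mono hCB))
    _ = σ.toMeasure.map p B + ε := by rw [Measure.map_apply hp hB]

lemma isClosed_measureLifts [IsProbabilityMeasure μ] (hp : Measurable p)
    (hfib : ∀ᵐ x ∂μ, IsCompact (p ⁻¹' {x})) : IsClosed (measureLifts μ p) := by
  have hinter : measureLifts μ p = ⋂ (C) (_ : MeasurableSet C) (_ : IsCompact (p ⁻¹' C)),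
      {σ : ProbabilityMeasure Y | μ C ≤ σ.toMeasure (p ⁻¹' C)} := by
    ext σ
    simp only [mem_iInter]
    exact ⟨fun hσ C hC _ ↦ (measure_preimage_of_mem_measureLifts hσ hp hC).ge,
      mem_measureLifts_of_forall_isCompact_preimage hp hfib⟩
  rw [hinter]
  exact isClosed_iInter fun C ↦ isClosed_iInter fun _ ↦ isClosed_iInter fun hpC ↦
    isClosed_setOf_le_measure hpC.isClosed (μ C)

lemma isCompact_measureLifts [IsProbabilityMeasure μ] (hp : Measurable p)
    (hfib : ∀ᵐ x ∂μ, IsCompact (p ⁻¹' {x})) : IsCompact (measureLifts μ p) :=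
  (isClosed_measureLifts hp hfib).closure_eq ▸
    isCompact_closure_of_isTightMeasureSet (isTightMeasureSet_measureLifts hp hfib)

end Lifts

/-- **Lemma 3.1.** Let `X` be a standard Borel space with a Borel probability measure `μ`,
`Y` a Polish space, and `p : Y → X` a Borel map with `μ (range p) = 1` whose fibers are compact
for `μ`-a.e. `x`. Then the set `M` of Borel probability measures `σ` on `Y` with `p_* σ = μ` is a
non-empty, convex, compact subset of `P(Y)` with the weak* topology (the topology of weak
convergence on `MeasureTheory.ProbabilityMeasure Y`). Convexity is stated via the affine
structure on the underlying measures. -/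
theorem lifts_nonempty_convex_compact
    {X : Type*} [MeasurableSpace X] [StandardBorelSpace X]
    (μ : Measure X) [IsProbabilityMeasure μ]
    {Y : Type*} [TopologicalSpace Y] [PolishSpace Y] [MeasurableSpace Y] [BorelSpace Y]
    (p : Y → X) (hp : Measurable p)
    (hfull : μ (Set.range p) = 1)
    (hfib : ∀ᵐ x ∂μ, IsCompact (p ⁻¹' {x}))
    (M : Set (ProbabilityMeasure Y))
    (hM : M = {σ : ProbabilityMeasure Y | σ.toMeasure.map p = μ}) :
    M.Nonempty ∧ IsCompact M ∧
      (∀ σ ∈ M, ∀ τ ∈ M, ∀ a b : ℝ≥0∞, a + b = 1 →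
        ∀ ρ : ProbabilityMeasure Y,
          ρ.toMeasure = a • σ.toMeasure + b • τ.toMeasure → ρ ∈ M) := by
  obtain rfl : M = measureLifts μ p := hM
  have hrange : ∀ᵐ x ∂μ, x ∈ range p := by
    have hnull : NullMeasurableSet (range p) μ :=
      image_univ (f := p) ▸ nullMeasurableSet_image_of_measurable hp .univ μ
    exact (ae_iff_measure_eq hnull).2 (hfull.trans measure_univ.symm)
  exact ⟨measureLifts_nonempty hp hrange, isCompact_measureLifts hp hfib,
    fun _ hσ _ hτ _ _ hab _ hρ ↦ mem_measureLifts_of_toMeasure_eq hp hσ hτ hab hρ⟩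
end
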